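/- arXiv:1801.01336 — 5 statements merged into one kernel-verified Lean document; each statement's English description precedes it below -/
import Mathlib

section
/- Let Δ ≥ 4 be an even integer and let t be an integer with 1 ≤ t ≤ Δ−2. For every proper edge-coloring c of the multigraph H^Δ_t and every index j ∈ {0,…,Δ−1}, the palettes of the two matched non-central vertices are distinct: P_c(v_j) ≠ P_c(v_{j'}), where j' denotes the partner of j. -/
/-!
The color of the spoke `e_j` lies in the palette of `v_j` but not in that of `v_{j'}`: the edges
at `v_{j'}` are its own spoke, which meets `e_j` at `u`, and the parallel edges, which meet `e_j`
at `v_j`, so properness makes all their colors differ from that of `e_j`.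
-/

/-- A proper edge-coloring of a multigraph given by an edge-index type `E`,
a vertex type `V` and an endpoints map `ends : E → Sym2 V`: distinct edges
sharing an endpoint receive distinct colors. -/
def MG.Proper {E V C : Type*} (ends : E → Sym2 V) (c : E → C) : Prop :=
  ∀ e₁ e₂ : E, e₁ ≠ e₂ → (∃ x : V, x ∈ ends e₁ ∧ x ∈ ends e₂) → c e₁ ≠ c e₂

/-- The palette of a vertex: the set of colors of the edges incident with it. -/
def MG.palette {E V C : Type*} (ends : E → Sym2 V) (c : E → C) (x : V) : Set C :=
  {γ : C | ∃ e : E, x ∈ ends e ∧ c e = γ}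

/-- The multigraph `H^Δ_t`: vertices are `none` (the center `u`) and `some j`
(the vertex `v_j`), edges are the spokes `e_j = u v_j` together with `t`
parallel edges between `v_{2i}` and `v_{2i+1}`. -/
def Hends (Δ t : ℕ) : (Fin Δ ⊕ Fin (Δ / 2) × Fin t) → Sym2 (Option (Fin Δ))
  | Sum.inl j => s(none, some j)
  | Sum.inr (i, _) =>
      s(some ⟨2 * i.1, by have := i.2; omega⟩, some ⟨2 * i.1 + 1, by have := i.2; omega⟩)

/-- The partner `j'` of an index `j`: `j+1` if `j` is even, `j-1` if `j` is odd. -/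
def partner {Δ : ℕ} (hΔ : 2 ∣ Δ) (j : Fin Δ) : Fin Δ :=
  ⟨if j.1 % 2 = 0 then j.1 + 1 else j.1 - 1, by
    obtain ⟨k, hk⟩ := hΔ; have := j.2; split <;> omega⟩

namespace MG

variable {E V C : Type*} {ends : E → Sym2 V}

theorem mem_palette_of_mem_ends (c : E → C) {e : E} {x : V} (hx : x ∈ ends e) :
    c e ∈ palette ends c x :=
  ⟨e, hx, rfl⟩

theorem Proper.notMem_palette {c : E → C} (hc : Proper ends c) {e : E} {y : V}
    (hy : y ∉ ends e) (hmeet : ∀ f, y ∈ ends f → ∃ x, x ∈ ends f ∧ x ∈ ends e) :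
    c e ∉ palette ends c y := by
  rintro ⟨f, hyf, hcolor⟩
  have hfe : f ≠ e := by
    rintro rfl
    exact hy hyf
  exact hc f e hfe (hmeet f hyf) hcolor

end MG

section Partner

variable {Δ : ℕ} (hev : 2 ∣ Δ) (j : Fin Δ)

theorem partner_ne_self : partner hev j ≠ j := by
  simp only [partner, ne_eq, Fin.ext_iff]
  split <;> omega

theorem partner_val_div_two : (partner hev j).val / 2 = j.val / 2 := by
  simp only [partner]
  split <;> omega

end Partner

section Hends

variable {Δ t : ℕ}

theorem none_mem_Hends_inl (j : Fin Δ) : none ∈ Hends Δ t (Sum.inl j) :=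
  Sym2.mem_mk_left none (some j)

theorem some_mem_Hends_inl_iff {j k : Fin Δ} : some k ∈ Hends Δ t (Sum.inl j) ↔ k = j := by
  simp [Hends]

theorem some_mem_Hends_inr_iff {j : Fin Δ} {i : Fin (Δ / 2)} {s : Fin t} :
    some j ∈ Hends Δ t (Sum.inr (i, s)) ↔ j.val / 2 = i.val := by
  simp only [Hends, Sym2.mem_iff, Option.some.injEq, Fin.ext_iff]
  omega

theorem some_partner_mem_Hends_inr_iff (hev : 2 ∣ Δ) {j : Fin Δ} {p : Fin (Δ / 2) × Fin t} :
    some (partner hev j) ∈ Hends Δ t (Sum.inr p) ↔ some j ∈ Hends Δ t (Sum.inr p) := by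
  rw [some_mem_Hends_inr_iff, some_mem_Hends_inr_iff, partner_val_div_two]

theorem exists_mem_Hends_inl_of_some_partner_mem (hev : 2 ∣ Δ) (j : Fin Δ)
    (f : Fin Δ ⊕ Fin (Δ / 2) × Fin t) (hf : some (partner hev j) ∈ Hends Δ t f) :
    ∃ x, x ∈ Hends Δ t f ∧ x ∈ Hends Δ t (Sum.inl j) := by
  rcases f with k | p
  · exact ⟨none, none_mem_Hends_inl k, none_mem_Hends_inl j⟩
  · exact ⟨some j, (some_partner_mem_Hends_inr_iff hev).mp hf, some_mem_Hends_inl_iff.mpr rfl⟩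

theorem spoke_color_notMem_palette_partner (hev : 2 ∣ Δ) {C : Type*}
    {c : (Fin Δ ⊕ Fin (Δ / 2) × Fin t) → C} (hc : MG.Proper (Hends Δ t) c) (j : Fin Δ) :
    c (Sum.inl j) ∉ MG.palette (Hends Δ t) c (some (partner hev j)) :=
  hc.notMem_palette (some_mem_Hends_inl_iff.not.mpr (partner_ne_self hev j))
    (exists_mem_Hends_inl_of_some_partner_mem hev j)

end Hends

theorem palettes_of_matched_vertices_distinct_general {Δ t : ℕ} (hev : 2 ∣ Δ) {C : Type*}
    (c : (Fin Δ ⊕ Fin (Δ / 2) × Fin t) → C) (hc : MG.Proper (Hends Δ t) c) (j : Fin Δ) :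
    MG.palette (Hends Δ t) c (some j) ≠ MG.palette (Hends Δ t) c (some (partner hev j)) := by
  intro heq
  have hspoke : c (Sum.inl j) ∈ MG.palette (Hends Δ t) c (some j) :=
    MG.mem_palette_of_mem_ends c (some_mem_Hends_inl_iff.mpr rfl)
  exact spoke_color_notMem_palette_partner hev hc j (heq ▸ hspoke)

/-- for every proper edge-coloring of `H^Δ_t` (Δ ≥ 4 even,
1 ≤ t ≤ Δ−2) and every index `j`, the palettes of the matched non-central
vertices `v_j` and `v_{j'}` are distinct. -/
theorem palettes_of_matched_vertices_distinct {Δ t : ℕ} (hΔ : 4 ≤ Δ) (hev : 2 ∣ Δ)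
    (ht1 : 1 ≤ t) (ht2 : t ≤ Δ - 2) {C : Type*}
    (c : (Fin Δ ⊕ Fin (Δ / 2) × Fin t) → C) (hc : MG.Proper (Hends Δ t) c)
    (j : Fin Δ) :
    MG.palette (Hends Δ t) c (some j) ≠ MG.palette (Hends Δ t) c (some (partner hev j)) :=
  palettes_of_matched_vertices_distinct_general hev c hc j
end

section
/- Let Δ ≥ 4 be an even integer and let t be an integer with 1 ≤ t ≤ Δ−2. Let c be a proper edge-coloring of the multigraph H^Δ_t. Then for every j the color c(e_j) of the spoke at v_j does not belong to P_c(v_{j'}); moreover, if h ≠ j is an index with P_c(v_j) = P_c(v_h), then c(e_j) belongs to P_c(v_{h'}). -/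
/-!
If a vertex `v_k` with `k ≠ j` sees the color of the spoke `e_j`, it sees it on an edge to its
partner `v_{k'}`: the spoke `e_k` meets `e_j` at the center, so it is colored differently. Hence
`v_{k'}` sees the color as well, which for `k = h` is the second claim. For `k = j'` the edge joins
`v_{j'}` to `v_j`, where `e_j` is the only edge of this color, although `e_j` leads to the center.
-/

namespace MG

variable {E V C J : Type*} {ends : E → Sym2 V} {c : E → C}

theorem color_mem_palette {e : E} {x : V} (he : x ∈ ends e) : c e ∈ palette ends c x :=
  ⟨e, he, rfl⟩

theorem Proper.eq_of_color_eq (hc : Proper ends c) {e₁ e₂ : E} {x : V} (h₁ : x ∈ ends e₁)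
    (h₂ : x ∈ ends e₂) (hcolor : c e₁ = c e₂) : e₁ = e₂ :=
  by_contra fun hne ↦ hc e₁ e₂ hne ⟨x, h₁, h₂⟩ hcolor

/-- A multigraph containing a star with center `u`, leaves `v j` and spokes `spoke j`, whose leaves
are matched by the fixed-point-free involution `σ` so that any edge at a leaf other than its spoke
leads to the matched leaf. This is the structure of `H^Δ_t`, with an arbitrary index type and
arbitrary multiplicities of the edges between matched leaves. -/
structure IsPairedStar (ends : E → Sym2 V) (u : V) (v : J → V) (spoke : J → E) (σ : J → J) :
    Prop where
  leaf_injective : Function.Injective v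
  leaf_ne_center (j : J) : v j ≠ u
  ends_spoke (j : J) : ends (spoke j) = s(u, v j)
  involutive : Function.Involutive σ
  partner_ne (j : J) : σ j ≠ j
  eq_spoke_or_ends_eq {e : E} {j : J} (he : v j ∈ ends e) :
    e = spoke j ∨ ends e = s(v j, v (σ j))

namespace IsPairedStar

variable {u : V} {v : J → V} {spoke : J → E} {σ : J → J}

theorem center_mem_ends_spoke (hG : IsPairedStar ends u v spoke σ) (j : J) :
    u ∈ ends (spoke j) :=
  hG.ends_spoke j ▸ Sym2.mem_mk_left u (v j)

theorem leaf_mem_ends_spoke (hG : IsPairedStar ends u v spoke σ) (j : J) :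
    v j ∈ ends (spoke j) :=
  hG.ends_spoke j ▸ Sym2.mem_mk_right u (v j)

theorem spoke_injective (hG : IsPairedStar ends u v spoke σ) : Function.Injective spoke := by
  intro i j hij
  have hends : s(u, v i) = s(u, v j) := by rw [← hG.ends_spoke, ← hG.ends_spoke, hij]
  exact hG.leaf_injective (Sym2.congr_right.mp hends)

theorem color_spoke_injective (hG : IsPairedStar ends u v spoke σ) (hc : Proper ends c) :
    Function.Injective fun j ↦ c (spoke j) := fun i j hij ↦
  hG.spoke_injective <|
    hc.eq_of_color_eq (hG.center_mem_ends_spoke i) (hG.center_mem_ends_spoke j) hij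

theorem exists_ends_eq_of_color_spoke_mem_palette (hG : IsPairedStar ends u v spoke σ)
    (hc : Proper ends c) {j k : J} (hkj : k ≠ j)
    (hmem : c (spoke j) ∈ palette ends c (v k)) :
    ∃ e, ends e = s(v k, v (σ k)) ∧ c e = c (spoke j) := by
  obtain ⟨e, he, hcolor⟩ := hmem
  rcases hG.eq_spoke_or_ends_eq he with rfl | hends
  · exact absurd (hG.color_spoke_injective hc hcolor) hkj
  · exact ⟨e, hends, hcolor⟩

theorem color_spoke_notMem_palette_partner (hG : IsPairedStar ends u v spoke σ)
    (hc : Proper ends c) (j : J) : c (spoke j) ∉ palette ends c (v (σ j)) := by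
  intro hmem
  obtain ⟨e, hends, hcolor⟩ :=
    hG.exists_ends_eq_of_color_spoke_mem_palette hc (hG.partner_ne j) hmem
  rw [hG.involutive j] at hends
  have hleaf : v j ∈ ends e := hends ▸ Sym2.mem_mk_right _ _
  obtain rfl : e = spoke j := hc.eq_of_color_eq hleaf (hG.leaf_mem_ends_spoke j) hcolor
  have hcenter : v (σ j) = u := Sym2.congr_left.mp (hends.symm.trans (hG.ends_spoke j))
  exact hG.leaf_ne_center _ hcenter

theorem color_spoke_mem_palette_partner (hG : IsPairedStar ends u v spoke σ)
    (hc : Proper ends c) {j k : J} (hkj : k ≠ j)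
    (hmem : c (spoke j) ∈ palette ends c (v k)) :
    c (spoke j) ∈ palette ends c (v (σ k)) := by
  obtain ⟨e, hends, hcolor⟩ := hG.exists_ends_eq_of_color_spoke_mem_palette hc hkj hmem
  exact ⟨e, hends ▸ Sym2.mem_mk_right _ _, hcolor⟩

end IsPairedStar

end MG

theorem partner_involutive {Δ : ℕ} (hev : 2 ∣ Δ) : Function.Involutive (partner hev) := by
  intro j
  simp only [partner, Fin.ext_iff]
  grind

theorem partner_ne {Δ : ℕ} (hev : 2 ∣ Δ) (j : Fin Δ) : partner hev j ≠ j := by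
  simp only [partner, ne_eq, Fin.ext_iff]
  grind

theorem Hends_inr_eq_of_mem {Δ t : ℕ} (hev : 2 ∣ Δ) {j : Fin Δ} {p : Fin (Δ / 2) × Fin t}
    (hj : some j ∈ Hends Δ t (Sum.inr p)) :
    Hends Δ t (Sum.inr p) = s(some j, some (partner hev j)) := by
  simp only [Hends, Sym2.mem_iff, Sym2.eq_iff, Option.some.injEq, Fin.ext_iff, partner] at hj ⊢
  grind

theorem Hends_isPairedStar {Δ : ℕ} (hev : 2 ∣ Δ) (t : ℕ) :
    MG.IsPairedStar (Hends Δ t) none some Sum.inl (partner hev) where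
  leaf_injective := Option.some_injective _
  leaf_ne_center := Option.some_ne_none
  ends_spoke _ := rfl
  involutive := partner_involutive hev
  partner_ne := partner_ne hev
  eq_spoke_or_ends_eq {e j} he := by
    rcases e with k | p
    · left
      simpa [Hends, eq_comm] using he
    · exact Or.inr (Hends_inr_eq_of_mem hev he)

theorem spoke_color_not_in_partner_palette_general {E V C J : Type*} {ends : E → Sym2 V} {u : V}
    {v : J → V} {spoke : J → E} {σ : J → J} (hG : MG.IsPairedStar ends u v spoke σ)
    {c : E → C} (hc : MG.Proper ends c) (j : J) :
    c (spoke j) ∉ MG.palette ends c (v (σ j)) ∧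
    ∀ h : J, h ≠ j → MG.palette ends c (v j) = MG.palette ends c (v h) →
      c (spoke j) ∈ MG.palette ends c (v (σ h)) := by
  refine ⟨hG.color_spoke_notMem_palette_partner hc j, fun h hhj hpalette ↦ ?_⟩
  have hmem : c (spoke j) ∈ MG.palette ends c (v h) :=
    hpalette ▸ MG.color_mem_palette (hG.leaf_mem_ends_spoke j)
  exact hG.color_spoke_mem_palette_partner hc hhj hmem

/-- the color of the spoke `e_j` does not belong to the palette of
`v_{j'}`; and if `h ≠ j` has the same palette as `v_j`, then the color of `e_j`
belongs to the palette of `v_{h'}`. -/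
theorem spoke_color_not_in_partner_palette {Δ t : ℕ} (hΔ : 4 ≤ Δ) (hev : 2 ∣ Δ)
    (ht1 : 1 ≤ t) (ht2 : t ≤ Δ - 2) {C : Type*}
    (c : (Fin Δ ⊕ Fin (Δ / 2) × Fin t) → C) (hc : MG.Proper (Hends Δ t) c)
    (j : Fin Δ) :
    c (Sum.inl j) ∉ MG.palette (Hends Δ t) c (some (partner hev j)) ∧
    ∀ h : Fin Δ, h ≠ j →
      MG.palette (Hends Δ t) c (some j) = MG.palette (Hends Δ t) c (some h) →
      c (Sum.inl j) ∈ MG.palette (Hends Δ t) c (some (partner hev h)) :=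
  spoke_color_not_in_partner_palette_general (Hends_isPairedStar hev t) hc j
end

section
/- Let Δ ≥ 4 be an even integer and let t be an integer with 1 ≤ t ≤ Δ−2. Then for every proper edge-coloring c of the multigraph H^Δ_t, the number of distinct palettes occurring among the vertices of H^Δ_t is strictly greater than Δ/2 + 1. Consequently the palette index of H^Δ_t satisfies š(H^Δ_t) > Δ/2 + 1. -/
/-- The palette index of a multigraph: the minimum, over all proper
edge-colorings with colors in ℕ, of the number of distinct palettes. -/
noncomputable def paletteIndex {E V : Type*} (ends : E → Sym2 V) : ℕ :=
  sInf {n : ℕ | ∃ c : E → ℕ, MG.Proper ends c ∧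
    {P : Set ℕ | ∃ x : V, MG.palette ends c x = P}.ncard = n}

/-- The multigraph `G^Δ`: the disjoint union of the multigraphs `H^Δ_t`
for `t = 1, …, Δ−2` (the component indexed by `t : Fin (Δ-2)` is
`H^Δ_{t+1}`). -/
def Gends (Δ : ℕ) :
    (Σ t : Fin (Δ - 2), (Fin Δ ⊕ Fin (Δ / 2) × Fin (t.1 + 1))) →
      Sym2 (Fin (Δ - 2) × Option (Fin Δ))
  | ⟨t, e⟩ => (Hends Δ (t.1 + 1) e).map (fun v => (t, v))

/-!
If for every `x ∈ T` a nonempty family of sets has two members that differ on `T` in `x` alone, then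
the family has more than `|T|` traces on `T`: deleting `x` from `T` merges two traces, so each
element of `T` accounts for one more (this is the argument behind Bondy's theorem). The palettes of
the vertices `v_j` form such a family for `T` the set of colors of the spokes `e_{2i}`: the palettes
of `v_{2i}` and `v_{2i+1}` differ exactly in the colors of `e_{2i}` and `e_{2i+1}`. The center
contributes one further palette, because its degree `Δ` exceeds the degree, at most `t + 1`, of
every `v_j`.
-/

open scoped symmDiff

theorem symmDiff_insert_insert {α : Type*} {a b : α} {R : Set α} (ha : a ∉ R) (hb : b ∉ R)
    (hab : a ≠ b) : insert a R ∆ insert b R = {a, b} := by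
  ext x
  grind

section Trace

variable {α : Type*} {F : Set (Set α)} {T : Set α}

theorem finite_trace (F : Set (Set α)) (hT : T.Finite) : ((· ∩ T) '' F).Finite :=
  hT.finite_subsets.subset (Set.image_subset_iff.2 fun _ _ => Set.inter_subset_right)

theorem ncard_trace_lt_ncard_trace_insert {x : α} (hT : T.Finite) (hx : x ∉ T)
    {P Q : Set α} (hP : P ∈ F) (hQ : Q ∈ F) (hPQ : P ∆ Q ∩ insert x T = {x}) :
    ((· ∩ T) '' F).ncard < ((· ∩ insert x T) '' F).ncard := by
  have retrace : (· ∩ T) '' ((· ∩ insert x T) '' F) = (· ∩ T) '' F := by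
    simp only [Set.image_image, Set.inter_assoc,
      Set.inter_eq_self_of_subset_right (Set.subset_insert x T)]
  have merged : P ∩ insert x T ∩ T = Q ∩ insert x T ∩ T := by
    rw [← Set.symmDiff_eq_empty, ← Set.inter_symmDiff_distrib_right,
      ← Set.inter_symmDiff_distrib_right, hPQ, Set.singleton_inter_eq_empty]
    exact hx
  have distinct : P ∩ insert x T ≠ Q ∩ insert x T := by
    rw [← Set.symmDiff_nonempty, ← Set.inter_symmDiff_distrib_right, hPQ]
    exact Set.singleton_nonempty x
  have not_injOn : ¬ Set.InjOn (· ∩ T) ((· ∩ insert x T) '' F) := fun hinj =>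
    distinct (hinj (Set.mem_image_of_mem _ hP) (Set.mem_image_of_mem _ hQ) merged)
  have hfin : ((· ∩ insert x T) '' F).Finite := finite_trace F (hT.insert x)
  rw [← retrace]
  exact (Set.ncard_image_le hfin).lt_of_ne fun h => not_injOn (Set.injOn_of_ncard_image_eq h hfin)

theorem ncard_lt_ncard_trace (hne : F.Nonempty) (hT : T.Finite)
    (hsep : ∀ x ∈ T, ∃ P ∈ F, ∃ Q ∈ F, P ∆ Q ∩ T = {x}) :
    T.ncard < ((· ∩ T) '' F).ncard := by
  induction T, hT using Set.Finite.induction_on with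
  | empty =>
    rw [Set.ncard_empty, Set.ncard_pos (finite_trace F Set.finite_empty)]
    exact hne.image _
  | @insert x T hx hT ih =>
    have hsepT : ∀ y ∈ T, ∃ P ∈ F, ∃ Q ∈ F, P ∆ Q ∩ T = {y} := by
      intro y hy
      obtain ⟨P, hP, Q, hQ, hPQ⟩ := hsep y (Set.mem_insert_of_mem x hy)
      refine ⟨P, hP, Q, hQ, ?_⟩
      rw [← Set.inter_eq_self_of_subset_right (Set.subset_insert x T), ← Set.inter_assoc, hPQ,
        Set.inter_eq_left, Set.singleton_subset_iff]
      exact hy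
    obtain ⟨P, hP, Q, hQ, hPQ⟩ := hsep x (Set.mem_insert x T)
    calc (insert x T).ncard = T.ncard + 1 := Set.ncard_insert_of_notMem hx hT
      _ ≤ ((· ∩ T) '' F).ncard := ih hsepT
      _ < ((· ∩ insert x T) '' F).ncard := ncard_trace_lt_ncard_trace_insert hT hx hP hQ hPQ

end Trace

namespace MG

variable {E V C : Type*} {ends : E → Sym2 V} {c : E → C}

/-- The set of edges of a multigraph incident with a vertex; in the absence of loops its
cardinality is the degree of the vertex. -/
def incidenceSet (ends : E → Sym2 V) (x : V) : Set E := {e | x ∈ ends e}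

theorem palette_eq_image_incidenceSet (ends : E → Sym2 V) (c : E → C) (x : V) :
    palette ends c x = c '' incidenceSet ends x := rfl

theorem Proper.injOn_incidenceSet (hc : Proper ends c) (x : V) :
    Set.InjOn c (incidenceSet ends x) := by
  intro e he f hf hef
  by_contra hne
  exact hc e f hne ⟨x, he, hf⟩ hef

theorem Proper.ncard_palette (hc : Proper ends c) (x : V) :
    (palette ends c x).ncard = (incidenceSet ends x).ncard :=
  (hc.injOn_incidenceSet x).ncard_image

theorem Proper.of_injective (ends : E → Sym2 V) (hc : Function.Injective c) : Proper ends c :=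
  fun _ _ hne _ => hc.ne hne

theorem exists_proper_ncard_eq_paletteIndex [Countable E] (ends : E → Sym2 V) :
    ∃ c : E → ℕ, Proper ends c ∧ (Set.range (palette ends c)).ncard = paletteIndex ends := by
  obtain ⟨c, hc⟩ := exists_injective_nat E
  have hne : {n | ∃ c : E → ℕ, Proper ends c ∧
      (Set.range (palette ends c)).ncard = n}.Nonempty :=
    ⟨_, c, Proper.of_injective ends hc, rfl⟩
  exact Nat.sInf_mem hne

end MG

open MG

section Hends

variable {Δ t : ℕ} {C : Type*} {c : (Fin Δ ⊕ Fin (Δ / 2) × Fin t) → C}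

/-- The parallel edges of `H^Δ_t` at `v_j`. For odd `Δ` the last vertex is unpaired and the set is
empty. -/
def parallelEdges (t : ℕ) (j : Fin Δ) : Set (Fin Δ ⊕ Fin (Δ / 2) × Fin t) :=
  .inr '' {p | p.1.val = j.val / 2}

theorem incidenceSet_Hends_none :
    incidenceSet (Hends Δ t) none = Set.range Sum.inl := by
  ext (j | p) <;> simp [incidenceSet, Hends]

theorem incidenceSet_Hends_some (j : Fin Δ) :
    incidenceSet (Hends Δ t) (some j) = insert (.inl j) (parallelEdges t j) := by
  ext (k | p)
  · simp [incidenceSet, Hends, parallelEdges, eq_comm]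
  · simp [incidenceSet, Hends, parallelEdges, Fin.ext_iff]
    omega

theorem ncard_incidenceSet_Hends_none : (incidenceSet (Hends Δ t) none).ncard = Δ := by
  rw [incidenceSet_Hends_none, Set.ncard_range_of_injective Sum.inl_injective, Nat.card_fin]

theorem ncard_parallelEdges_le (j : Fin Δ) : (parallelEdges t j).ncard ≤ t := by
  have snd_injOn : Set.InjOn Prod.snd {p : Fin (Δ / 2) × Fin t | p.1.val = j.val / 2} :=
    fun p hp q hq hpq => Prod.ext (Fin.ext (hp.trans hq.symm)) hpq
  rw [parallelEdges, Set.ncard_image_of_injective _ Sum.inr_injective, ← snd_injOn.ncard_image]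
  exact (Set.ncard_le_card _).trans_eq (Nat.card_fin t)

theorem ncard_incidenceSet_Hends_some_le (j : Fin Δ) :
    (incidenceSet (Hends Δ t) (some j)).ncard ≤ t + 1 := by
  rw [incidenceSet_Hends_some]
  exact (Set.ncard_insert_le _ _).trans (Nat.add_le_add_right (ncard_parallelEdges_le j) 1)

theorem palette_Hends_none_ne_some (ht : t + 1 < Δ) (hc : Proper (Hends Δ t) c) (j : Fin Δ) :
    palette (Hends Δ t) c none ≠ palette (Hends Δ t) c (some j) := by
  intro h
  have degree_eq := congrArg Set.ncard h
  rw [hc.ncard_palette, hc.ncard_palette, ncard_incidenceSet_Hends_none] at degree_eq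
  have degree_le := ncard_incidenceSet_Hends_some_le (t := t) j
  omega

theorem spoke_color_injective (hc : Proper (Hends Δ t) c) :
    Function.Injective fun j => c (.inl j) := by
  have hinj := hc.injOn_incidenceSet none
  rw [incidenceSet_Hends_none] at hinj
  exact fun j k h => Sum.inl_injective (hinj ⟨j, rfl⟩ ⟨k, rfl⟩ h)

theorem palette_Hends_some (c : (Fin Δ ⊕ Fin (Δ / 2) × Fin t) → C) (j : Fin Δ) :
    palette (Hends Δ t) c (some j) =
      insert (c (.inl j)) (c '' parallelEdges t j) := by
  rw [palette_eq_image_incidenceSet, incidenceSet_Hends_some, Set.image_insert_eq]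

theorem spoke_color_notMem (hc : Proper (Hends Δ t) c) (j : Fin Δ) :
    c (.inl j) ∉ c '' parallelEdges t j := by
  have hinj := hc.injOn_incidenceSet (some j)
  rw [incidenceSet_Hends_some] at hinj
  exact ((Set.injOn_insert (by simp [parallelEdges])).1 hinj).2

theorem symmDiff_palette_Hends (hc : Proper (Hends Δ t) c) {j k : Fin Δ} (hjk : j ≠ k)
    (hpair : j.val / 2 = k.val / 2) :
    palette (Hends Δ t) c (some j) ∆ palette (Hends Δ t) c (some k) =
      {c (.inl j), c (.inl k)} := by
  have hparallel : parallelEdges t j = parallelEdges t k := by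
    simp only [parallelEdges, hpair]
  rw [palette_Hends_some, palette_Hends_some, hparallel]
  exact symmDiff_insert_insert (hparallel ▸ spoke_color_notMem hc j) (spoke_color_notMem hc k)
    ((spoke_color_injective hc).ne hjk)

/-- The index `2 * i` of the first vertex of the `i`-th pair joined by parallel edges. -/
def evenIndex (i : Fin (Δ / 2)) : Fin Δ := ⟨2 * i, by omega⟩

/-- The index `2 * i + 1` of the second vertex of the `i`-th pair joined by parallel edges. -/
def oddIndex (i : Fin (Δ / 2)) : Fin Δ := ⟨2 * i + 1, by omega⟩

theorem evenIndex_injective : Function.Injective (evenIndex (Δ := Δ)) := by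
  intro i k h
  simpa [evenIndex, Fin.ext_iff] using h

theorem evenIndex_ne_oddIndex (i k : Fin (Δ / 2)) : evenIndex i ≠ oddIndex k := by
  simp only [evenIndex, oddIndex, ne_eq, Fin.mk.injEq]
  omega

theorem evenIndex_div_two_eq_oddIndex_div_two (i : Fin (Δ / 2)) :
    (evenIndex i).val / 2 = (oddIndex i).val / 2 := by
  simp only [evenIndex, oddIndex]
  omega

/-- The colors of the spokes `e_{2i}` that belong to a pair, the set on which the palettes are
compared. -/
def evenSpokeColors (c : (Fin Δ ⊕ Fin (Δ / 2) × Fin t) → C) : Set C :=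
  Set.range fun i => c (.inl (evenIndex i))

theorem ncard_evenSpokeColors (hc : Proper (Hends Δ t) c) : (evenSpokeColors c).ncard = Δ / 2 :=
  (Set.ncard_range_of_injective ((spoke_color_injective hc).comp evenIndex_injective)).trans
    (Nat.card_fin _)

theorem symmDiff_palette_inter_evenSpokeColors (hc : Proper (Hends Δ t) c) (i : Fin (Δ / 2)) :
    palette (Hends Δ t) c (some (evenIndex i)) ∆ palette (Hends Δ t) c (some (oddIndex i)) ∩
      evenSpokeColors c = {c (.inl (evenIndex i))} := by
  have even_mem : c (.inl (evenIndex i)) ∈ evenSpokeColors c := ⟨i, rfl⟩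
  have odd_notMem : c (.inl (oddIndex i)) ∉ evenSpokeColors c := by
    rintro ⟨k, hk⟩
    exact evenIndex_ne_oddIndex k i (spoke_color_injective hc hk)
  rw [symmDiff_palette_Hends hc (evenIndex_ne_oddIndex i i)
      (evenIndex_div_two_eq_oddIndex_div_two i),
    Set.insert_inter_of_mem even_mem, Set.singleton_inter_eq_empty.2 odd_notMem, insert_empty_eq]

theorem half_lt_ncard_palettes_some (hΔ : 0 < Δ) (hc : Proper (Hends Δ t) c) :
    Δ / 2 < (Set.range (palette (Hends Δ t) c ∘ some)).ncard := by
  set F := Set.range (palette (Hends Δ t) c ∘ some)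
  have hsep : ∀ γ ∈ evenSpokeColors c, ∃ P ∈ F, ∃ Q ∈ F, P ∆ Q ∩ evenSpokeColors c = {γ} := by
    rintro _ ⟨i, rfl⟩
    exact ⟨_, ⟨evenIndex i, rfl⟩, _, ⟨oddIndex i, rfl⟩,
      symmDiff_palette_inter_evenSpokeColors hc i⟩
  calc Δ / 2 = (evenSpokeColors c).ncard := (ncard_evenSpokeColors hc).symm
    _ < ((· ∩ evenSpokeColors c) '' F).ncard :=
        ncard_lt_ncard_trace ⟨_, ⟨0, hΔ⟩, rfl⟩ (Set.finite_range _) hsep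
    _ ≤ F.ncard := Set.ncard_image_le (Set.finite_range _)

theorem half_add_one_lt_ncard_palettes (ht : t + 1 < Δ) (hc : Proper (Hends Δ t) c) :
    Δ / 2 + 1 < (Set.range (palette (Hends Δ t) c)).ncard := by
  have center_notMem : palette (Hends Δ t) c none ∉
      Set.range (palette (Hends Δ t) c ∘ some) := by
    rintro ⟨j, hj⟩
    exact palette_Hends_none_ne_some ht hc j hj.symm
  calc Δ / 2 + 1
      < (Set.range (palette (Hends Δ t) c ∘ some)).ncard + 1 :=
        Nat.add_lt_add_right (half_lt_ncard_palettes_some (by omega) hc) 1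
    _ = (Set.range (palette (Hends Δ t) c)).ncard := by
        rw [Option.range_eq, Set.ncard_insert_of_notMem center_notMem (Set.finite_range _)]

end Hends

theorem paletteIndex_H_lower_bound_general {Δ t : ℕ} (ht : t + 1 < Δ) :
    (∀ {C : Type*} (c : (Fin Δ ⊕ Fin (Δ / 2) × Fin t) → C),
      MG.Proper (Hends Δ t) c →
      Δ / 2 + 1 <
        {P : Set C | ∃ x : Option (Fin Δ), MG.palette (Hends Δ t) c x = P}.ncard) ∧
    Δ / 2 + 1 < paletteIndex (Hends Δ t) := by
  refine ⟨fun c hc => half_add_one_lt_ncard_palettes ht hc, ?_⟩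
  obtain ⟨c, hc, hcard⟩ := exists_proper_ncard_eq_paletteIndex (Hends Δ t)
  exact hcard ▸ half_add_one_lt_ncard_palettes ht hc

/-- every proper edge-coloring of `H^Δ_t` (Δ ≥ 4 even,
1 ≤ t ≤ Δ−2) has more than `Δ/2 + 1` distinct palettes; consequently
`š(H^Δ_t) > Δ/2 + 1`. -/
theorem paletteIndex_H_lower_bound {Δ t : ℕ} (hΔ : 4 ≤ Δ) (hev : 2 ∣ Δ)
    (ht1 : 1 ≤ t) (ht2 : t ≤ Δ - 2) :
    (∀ {C : Type*} (c : (Fin Δ ⊕ Fin (Δ / 2) × Fin t) → C),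
      MG.Proper (Hends Δ t) c →
      Δ / 2 + 1 <
        {P : Set C | ∃ x : Option (Fin Δ), MG.palette (Hends Δ t) c x = P}.ncard) ∧
    Δ / 2 + 1 < paletteIndex (Hends Δ t) :=
  paletteIndex_H_lower_bound_general (by omega)
end

section
/- Let Δ ≥ 4 be an even integer and let G^Δ be the disjoint union of the multigraphs H^Δ_t for t = 1, 2, …, Δ−2. Then the palette index of G^Δ satisfies (Δ/2)·(Δ−2) < š(G^Δ) < (Δ+1)·(Δ−2). In particular, G^Δ is a multigraph with maximum degree Δ whose palette index is bounded below by a quadratic polynomial in Δ. -/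
/-!
The rim vertices `v_{2i}` and `v_{2i+1}` share their parallel edges, so their palettes differ only
in the colors of their two spokes, and the spokes of one component have distinct colors. Hence
membership of the color of the spoke at `v_{2i}`, together with the palette size, which identifies
the component, is a test separating the palettes of exactly one of the `Δ / 2 * (Δ - 2)` rim pairs.
Pairs with such tests are the edges of a forest on the palettes, and a forest has fewer edges than
vertices.

For the upper bound, color the spokes of every component by `0, …, Δ - 1`, so that all centers have
the same palette.
-/

-- In `(ZMod 2)^ι`, the test vectors of `x k` and `y k` differ by the `k`-th unit vector, so the
-- test vectors of all points affinely span a space of dimension `card ι`.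
theorem card_lt_card_of_separated_pairs {ι α : Type*} [Fintype ι] [Fintype α] [Nonempty α]
    (x y : ι → α) (test : ι → α → Prop)
    (hsep : ∀ i k, (test i (x k) ↔ test i (y k)) ↔ i ≠ k) :
    Fintype.card ι < Fintype.card α := by
  classical
  let vec : α → ι → ZMod 2 := fun a i => if test i a then 1 else 0
  have vec_sub (k : ι) : vec (x k) - vec (y k) = Pi.single k 1 := by
    ext i
    have h := hsep i k
    by_cases hx : test i (x k) <;> by_cases hy : test i (y k) <;> simp_all [vec]
  have span_eq_top : vectorSpan (ZMod 2) (Set.range vec) = ⊤ := by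
    rw [eq_top_iff, ← (Pi.basisFun (ZMod 2) ι).span_eq, Submodule.span_le]
    rintro _ ⟨k, rfl⟩
    rw [Pi.basisFun_apply, ← vec_sub, ← vsub_eq_sub]
    exact vsub_mem_vectorSpan _ (Set.mem_range_self _) (Set.mem_range_self _)
  have h := finrank_vectorSpan_range_add_one_le (ZMod 2) vec
  rw [span_eq_top, finrank_top, Module.finrank_fintype_fun_eq_card] at h
  exact h

namespace MG

variable {E V C : Type*} {ends : E → Sym2 V} {c : E → C} {x : V} {e e' : E}

theorem Proper.eq_of_color_eq_s6 (hc : Proper ends c) (he : x ∈ ends e) (he' : x ∈ ends e')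
    (h : c e = c e') : e = e' :=
  by_contra fun hne => hc e e' hne ⟨x, he, he'⟩ h

end MG

section PaletteIndex

variable {E V : Type*} {ends : E → Sym2 V} {c : E → ℕ}

theorem paletteIndex_le_ncard_range_palette (hc : MG.Proper ends c) :
    paletteIndex ends ≤ (Set.range (MG.palette ends c)).ncard :=
  Nat.sInf_le ⟨c, hc, rfl⟩

theorem exists_proper_ncard_range_palette_eq_paletteIndex (hc : MG.Proper ends c) :
    ∃ c' : E → ℕ, MG.Proper ends c' ∧
      (Set.range (MG.palette ends c')).ncard = paletteIndex ends :=
  Nat.sInf_mem (s := {n | ∃ c' : E → ℕ, MG.Proper ends c' ∧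
    (Set.range (MG.palette ends c')).ncard = n}) ⟨_, c, hc, rfl⟩

theorem paletteIndex_lt_card_of_palette_eq [Finite V] (hc : MG.Proper ends c) {x y : V}
    (hne : x ≠ y) (h : MG.palette ends c x = MG.palette ends c y) :
    paletteIndex ends < Nat.card V := by
  refine (paletteIndex_le_ncard_range_palette hc).trans_lt ?_
  rw [← Set.image_univ, ← Set.ncard_univ]
  refine (Set.ncard_image_le Set.finite_univ).lt_of_ne fun heq => hne ?_
  exact Set.injOn_of_ncard_image_eq heq Set.finite_univ (Set.mem_univ x) (Set.mem_univ y) h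

end PaletteIndex

namespace Hends

variable {Δ s : ℕ}

/-- The rim vertex `v_{2i}`, as an index in `Fin Δ`. -/
def leftEnd (i : Fin (Δ / 2)) : Fin Δ := ⟨2 * i.1, by omega⟩

/-- The rim vertex `v_{2i+1}`, as an index in `Fin Δ`. -/
def rightEnd (i : Fin (Δ / 2)) : Fin Δ := ⟨2 * i.1 + 1, by omega⟩

theorem leftEnd_div_two (i : Fin (Δ / 2)) : (leftEnd i).1 / 2 = i := by
  simp only [leftEnd]; omega

theorem rightEnd_div_two (i : Fin (Δ / 2)) : (rightEnd i).1 / 2 = i := by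
  simp only [rightEnd]; omega

theorem leftEnd_inj {i k : Fin (Δ / 2)} : leftEnd i = leftEnd k ↔ i = k := by
  simp only [leftEnd, Fin.ext_iff]; omega

theorem leftEnd_ne_rightEnd (i k : Fin (Δ / 2)) : leftEnd i ≠ rightEnd k := by
  simp only [leftEnd, rightEnd, ne_eq, Fin.ext_iff]; omega

theorem none_mem_inl (j : Fin Δ) : none ∈ Hends Δ s (Sum.inl j) :=
  Sym2.mem_mk_left _ _

theorem none_notMem_inr (p : Fin (Δ / 2) × Fin s) : none ∉ Hends Δ s (Sum.inr p) := by
  simp [Hends]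

theorem some_mem_inl {j k : Fin Δ} : some j ∈ Hends Δ s (Sum.inl k) ↔ j = k := by
  simp [Hends]

theorem some_mem_inr {j : Fin Δ} {p : Fin (Δ / 2) × Fin s} :
    some j ∈ Hends Δ s (Sum.inr p) ↔ j.1 / 2 = p.1 := by
  simp only [Hends, Sym2.mem_iff, Option.some.injEq, Fin.ext_iff]
  omega

section Palettes

variable {C : Type*} {c : Fin Δ ⊕ Fin (Δ / 2) × Fin s → C}

theorem palette_none :
    MG.palette (Hends Δ s) c none = Set.range fun j => c (Sum.inl j) := by
  ext γ
  simp [MG.palette, none_mem_inl, none_notMem_inr]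

theorem palette_some {j : Fin Δ} {i : Fin (Δ / 2)} (hj : j.1 / 2 = i) :
    MG.palette (Hends Δ s) c (some j) =
      insert (c (Sum.inl j)) (Set.range fun l => c (Sum.inr (i, l))) := by
  ext γ
  simp [MG.palette, some_mem_inl, some_mem_inr, hj, ← Fin.ext_iff, eq_comm]

theorem inl_injective_of_proper (hc : MG.Proper (Hends Δ s) c) :
    Function.Injective fun j => c (Sum.inl j) := fun j k h =>
  Sum.inl_injective (hc.eq_of_color_eq_s6 (none_mem_inl j) (none_mem_inl k) h)

theorem inl_notMem_range_inr (hc : MG.Proper (Hends Δ s) c) {j : Fin Δ} {i : Fin (Δ / 2)}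
    (hj : j.1 / 2 = i) : c (Sum.inl j) ∉ Set.range fun l => c (Sum.inr (i, l)) := by
  rintro ⟨l, hl⟩
  exact Sum.inr_ne_inl (hc.eq_of_color_eq_s6 (some_mem_inr.2 hj) (some_mem_inl.2 rfl) hl)

theorem ncard_palette_some (hc : MG.Proper (Hends Δ s) c) {j : Fin Δ} {i : Fin (Δ / 2)}
    (hj : j.1 / 2 = i) : (MG.palette (Hends Δ s) c (some j)).ncard = s + 1 := by
  have parallel_injective : Function.Injective fun l => c (Sum.inr (i, l)) := fun l m h => by
    simpa using hc.eq_of_color_eq_s6 (some_mem_inr.2 hj) (some_mem_inr.2 hj) h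
  rw [palette_some hj, Set.ncard_insert_of_notMem (inl_notMem_range_inr hc hj),
    ← Nat.card_coe_set_eq, Nat.card_range_of_injective parallel_injective, Nat.card_fin]

theorem inl_leftEnd_mem_palette_iff_iff_ne (hc : MG.Proper (Hends Δ s) c) (i k : Fin (Δ / 2)) :
    (c (Sum.inl (leftEnd i)) ∈ MG.palette (Hends Δ s) c (some (leftEnd k)) ↔
      c (Sum.inl (leftEnd i)) ∈ MG.palette (Hends Δ s) c (some (rightEnd k))) ↔ i ≠ k := by
  have hinj := inl_injective_of_proper hc
  have left_eq : c (Sum.inl (leftEnd i)) = c (Sum.inl (leftEnd k)) ↔ i = k :=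
    hinj.eq_iff.trans leftEnd_inj
  have right_ne : c (Sum.inl (leftEnd i)) ≠ c (Sum.inl (rightEnd k)) :=
    hinj.ne (leftEnd_ne_rightEnd i k)
  rw [palette_some (leftEnd_div_two k), palette_some (rightEnd_div_two k), Set.mem_insert_iff,
    Set.mem_insert_iff, left_eq, or_iff_right right_ne, or_iff_right_iff_imp]
  refine ⟨fun h hik => ?_, fun hik h => absurd h hik⟩
  exact inl_notMem_range_inr hc ((leftEnd_div_two i).trans (congrArg Fin.val hik)) (h hik)

end Palettes

/-- The coloring of `H^Δ_s` with spoke colors `0, …, Δ - 1` and, on each bundle of parallel edges,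
the colors `Δ, …, Δ + s - 1`. It makes the palette of the center independent of `s`. -/
def standardColoring (Δ s : ℕ) : Fin Δ ⊕ Fin (Δ / 2) × Fin s → ℕ :=
  Sum.elim (fun j => j) fun p => Δ + p.2

theorem standardColoring_proper (Δ s : ℕ) : MG.Proper (Hends Δ s) (standardColoring Δ s) := by
  rintro (j | ⟨i, l⟩) (k | ⟨i', l'⟩) hne ⟨x, hx, hx'⟩ h
  · exact hne (congrArg Sum.inl (Fin.ext h))
  · simp only [standardColoring, Sum.elim_inl, Sum.elim_inr] at h
    omega
  · simp only [standardColoring, Sum.elim_inl, Sum.elim_inr] at h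
    omega
  · obtain _ | j := x
    · exact none_notMem_inr _ hx
    · have hi : i = i' := Fin.ext ((some_mem_inr.1 hx).symm.trans (some_mem_inr.1 hx'))
      have hl : l = l' := Fin.ext (Nat.add_left_cancel h)
      exact hne (by rw [hi, hl])

end Hends

namespace Gends

variable {Δ : ℕ}

theorem mem_iff {t t' : Fin (Δ - 2)} {x : Option (Fin Δ)}
    {e : Fin Δ ⊕ Fin (Δ / 2) × Fin (t.1 + 1)} :
    (t', x) ∈ Gends Δ ⟨t, e⟩ ↔ t' = t ∧ x ∈ Hends Δ (t.1 + 1) e := by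
  simp only [Gends, Sym2.mem_map, Prod.mk.injEq]
  grind

section Coloring

variable {C : Type*} {c : (Σ t : Fin (Δ - 2), Fin Δ ⊕ Fin (Δ / 2) × Fin (t.1 + 1)) → C}

theorem proper_iff :
    MG.Proper (Gends Δ) c ↔ ∀ t, MG.Proper (Hends Δ (t.1 + 1)) fun e => c ⟨t, e⟩ := by
  constructor
  · rintro hc t e e' hne ⟨x, hx, hx'⟩
    exact hc _ _ (by simpa using hne) ⟨(t, x), mem_iff.2 ⟨rfl, hx⟩, mem_iff.2 ⟨rfl, hx'⟩⟩
  · rintro hc ⟨t, e⟩ ⟨t', e'⟩ hne ⟨⟨u, x⟩, hx, hx'⟩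
    obtain ⟨rfl, hx⟩ := mem_iff.1 hx
    obtain ⟨rfl, hx'⟩ := mem_iff.1 hx'
    exact hc _ e e' (fun h => hne (by rw [h])) ⟨x, hx, hx'⟩

theorem palette_mk (t : Fin (Δ - 2)) (x : Option (Fin Δ)) :
    MG.palette (Gends Δ) c (t, x) =
      MG.palette (Hends Δ (t.1 + 1)) (fun e => c ⟨t, e⟩) x := by
  ext γ
  constructor
  · rintro ⟨⟨t', e⟩, hx, rfl⟩
    obtain ⟨rfl, hx⟩ := mem_iff.1 hx
    exact ⟨e, hx, rfl⟩
  · rintro ⟨e, hx, rfl⟩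
    exact ⟨⟨t, e⟩, mem_iff.2 ⟨rfl, hx⟩, rfl⟩

/-- The test attached to the pair `v_{2i}, v_{2i+1}` of the component `p.1`, where `i = p.2`. The
size `p.1 + 2` is the degree of the rim vertices of that component, which is `H^Δ_{p.1+1}`. -/
def pairTest (c : (Σ t : Fin (Δ - 2), Fin Δ ⊕ Fin (Δ / 2) × Fin (t.1 + 1)) → C)
    (p : Fin (Δ - 2) × Fin (Δ / 2)) (P : Set C) : Prop :=
  P.ncard = p.1 + 2 ∧ c ⟨p.1, Sum.inl (Hends.leftEnd p.2)⟩ ∈ P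

theorem pairTest_iff_iff_ne (hc : MG.Proper (Gends Δ) c) (p r : Fin (Δ - 2) × Fin (Δ / 2)) :
    (pairTest c p (MG.palette (Gends Δ) c (r.1, some (Hends.leftEnd r.2))) ↔
      pairTest c p (MG.palette (Gends Δ) c (r.1, some (Hends.rightEnd r.2)))) ↔ p ≠ r := by
  obtain ⟨t, i⟩ := p
  obtain ⟨t', k⟩ := r
  have hc' := proper_iff.1 hc t'
  simp only [pairTest, palette_mk, Hends.ncard_palette_some hc' (Hends.leftEnd_div_two k),
    Hends.ncard_palette_some hc' (Hends.rightEnd_div_two k)]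
  obtain rfl | ht := eq_or_ne t t'
  · simpa using Hends.inl_leftEnd_mem_palette_iff_iff_ne hc' i k
  · have hval : t'.1 ≠ t := fun h => ht (Fin.ext h.symm)
    simp [hval, ht]

theorem mul_lt_ncard_range_palette (hΔ : 3 ≤ Δ) (hc : MG.Proper (Gends Δ) c) :
    Δ / 2 * (Δ - 2) < (Set.range (MG.palette (Gends Δ) c)).ncard := by
  classical
  have : Nonempty (Fin (Δ - 2)) := ⟨⟨0, by omega⟩⟩
  have h := card_lt_card_of_separated_pairs
    (fun p : Fin (Δ - 2) × Fin (Δ / 2) =>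
      Set.rangeFactorization (MG.palette (Gends Δ) c) (p.1, some (Hends.leftEnd p.2)))
    (fun p => Set.rangeFactorization (MG.palette (Gends Δ) c) (p.1, some (Hends.rightEnd p.2)))
    (fun p P => pairTest c p P) (pairTest_iff_iff_ne hc)
  rwa [Fintype.card_prod, Fintype.card_fin, Fintype.card_fin, mul_comm, ← Nat.card_eq_fintype_card,
    Nat.card_coe_set_eq] at h

end Coloring

/-- The coloring of `G^Δ` that is `Hends.standardColoring` on each component; all centers have the
same palette. -/
def standardColoring (Δ : ℕ) : (Σ t : Fin (Δ - 2), Fin Δ ⊕ Fin (Δ / 2) × Fin (t.1 + 1)) → ℕ :=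
  fun e => Hends.standardColoring Δ (e.1 + 1) e.2

theorem standardColoring_proper (Δ : ℕ) : MG.Proper (Gends Δ) (standardColoring Δ) :=
  proper_iff.2 fun t => Hends.standardColoring_proper Δ (t + 1)

theorem palette_standardColoring_none (t t' : Fin (Δ - 2)) :
    MG.palette (Gends Δ) (standardColoring Δ) (t, none) =
      MG.palette (Gends Δ) (standardColoring Δ) (t', none) := by
  rw [palette_mk, palette_mk, Hends.palette_none, Hends.palette_none]
  rfl

end Gends

theorem paletteIndex_G_bounds_general {Δ : ℕ} (hΔ : 4 ≤ Δ) :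
    Δ / 2 * (Δ - 2) < paletteIndex (Gends Δ) ∧
    paletteIndex (Gends Δ) < (Δ + 1) * (Δ - 2) := by
  have hproper := Gends.standardColoring_proper Δ
  constructor
  · obtain ⟨c, hc, hmin⟩ := exists_proper_ncard_range_palette_eq_paletteIndex hproper
    exact hmin ▸ Gends.mul_lt_ncard_range_palette (by omega) hc
  · have hne : ((⟨0, by omega⟩, none) : Fin (Δ - 2) × Option (Fin Δ)) ≠ (⟨1, by omega⟩, none) := by
      simp
    have h := paletteIndex_lt_card_of_palette_eq hproper hne
      (Gends.palette_standardColoring_none _ _)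
    rwa [Nat.card_prod, Nat.card_fin, Finite.card_option, Nat.card_fin, mul_comm] at h

/-- `(Δ/2)·(Δ−2) < š(G^Δ) < (Δ+1)·(Δ−2)` for even `Δ ≥ 4`. -/
theorem paletteIndex_G_bounds {Δ : ℕ} (hΔ : 4 ≤ Δ) (hev : 2 ∣ Δ) :
    Δ / 2 * (Δ - 2) < paletteIndex (Gends Δ) ∧
    paletteIndex (Gends Δ) < (Δ + 1) * (Δ - 2) :=
  paletteIndex_G_bounds_general hΔ
end

section
/- There exists a proper edge-coloring of the complete bipartite graph K_{5,6} using exactly 8 colors such that exactly 6 distinct palettes occur among the 11 vertices. Explicitly, with bipartition classes {u_1,…,u_5} and {v_1,…,v_6}, assigning to the edge u_i v_j the (i,j) entry of the matrix M' = [[1,2,3,4,5,6],[3,1,2,6,4,5],[2,3,1,5,6,4],[4,5,7,8,1,2],[5,4,8,7,2,1]] yields such a coloring. -/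
/-- A proper edge-coloring of a simple graph: distinct edges sharing a vertex
receive distinct colors. -/
def SG.Proper {V C : Type*} (G : SimpleGraph V) (c : G.edgeSet → C) : Prop :=
  ∀ e₁ e₂ : G.edgeSet, e₁ ≠ e₂ → (∃ x : V, x ∈ e₁.1 ∧ x ∈ e₂.1) → c e₁ ≠ c e₂

/-- The palette of a vertex: the set of colors of the edges incident with it. -/
def SG.palette {V C : Type*} (G : SimpleGraph V) (c : G.edgeSet → C) (x : V) : Set C :=
  {γ : C | ∃ e : G.edgeSet, x ∈ e.1 ∧ c e = γ}

/-- The matrix `M'` of colors: entry `(i,j)` is the color of the edge `u_i v_j`. -/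
def Mcol : Fin 5 → Fin 6 → ℕ :=
  ![![1, 2, 3, 4, 5, 6],
    ![3, 1, 2, 6, 4, 5],
    ![2, 3, 1, 5, 6, 4],
    ![4, 5, 7, 8, 1, 2],
    ![5, 4, 8, 7, 2, 1]]

/-- The color assignment extended symmetrically to pairs of vertices of
`K_{5,6}`. -/
def gcol : Fin 5 ⊕ Fin 6 → Fin 5 ⊕ Fin 6 → ℕ
  | Sum.inl i, Sum.inr j => Mcol i j
  | Sum.inr j, Sum.inl i => Mcol i j
  | _, _ => 0

/-- The induced coloring on unordered pairs. -/
def ccol : Sym2 (Fin 5 ⊕ Fin 6) → ℕ :=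
  Sym2.lift ⟨gcol, by intro x y; rcases x with i | j <;> rcases y with i' | j' <;> rfl⟩

/-!
A coloring of the edges of a complete bipartite graph is a matrix of colors. It is proper when no
row and no column repeats an entry, and the palettes of the vertices are the sets of entries of
the rows and of the columns. In `M'` the rows of `u_1, u_2, u_3` have equal entry sets, as do those
of `u_4, u_5`, the columns of `v_1, v_2` and the columns of `v_5, v_6`, which leaves `2 + 4`
palettes.
-/

namespace SG

section CompleteBipartite

variable {U V C : Type*}

/-- The edge joining `u` and `v` in the complete bipartite graph. Through it an edge-coloring `c`
is read as the matrix with entries `c (crossEdge u v)`. -/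
def crossEdge (u : U) (v : V) : (completeBipartiteGraph U V).edgeSet :=
  ⟨s(Sum.inl u, Sum.inr v), by simp⟩

lemma exists_crossEdge_eq (e : (completeBipartiteGraph U V).edgeSet) :
    ∃ u v, crossEdge u v = e := by
  obtain ⟨⟨u, v⟩, h⟩ := SimpleGraph.edgeSet_completeBipartiteGraph.subset e.2
  exact ⟨u, v, Subtype.ext h⟩

lemma inl_mem_crossEdge {u u' : U} {v : V} :
    Sum.inl u ∈ (crossEdge u' v).1 ↔ u = u' := by
  simp [crossEdge]

lemma inr_mem_crossEdge {u : U} {v v' : V} :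
    Sum.inr v ∈ (crossEdge u v').1 ↔ v = v' := by
  simp [crossEdge]

lemma proper_of_rows_cols_injective {c : (completeBipartiteGraph U V).edgeSet → C}
    (hrow : ∀ u, Function.Injective fun v => c (crossEdge u v))
    (hcol : ∀ v, Function.Injective fun u => c (crossEdge u v)) :
    Proper (completeBipartiteGraph U V) c := by
  rintro e₁ e₂ hne ⟨x, hx₁, hx₂⟩ hc
  obtain ⟨u₁, v₁, rfl⟩ := exists_crossEdge_eq e₁
  obtain ⟨u₂, v₂, rfl⟩ := exists_crossEdge_eq e₂
  apply hne
  rcases x with u | v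
  · obtain rfl := inl_mem_crossEdge.1 hx₁
    obtain rfl := inl_mem_crossEdge.1 hx₂
    exact congrArg (crossEdge u) (hrow u hc)
  · obtain rfl := inr_mem_crossEdge.1 hx₁
    obtain rfl := inr_mem_crossEdge.1 hx₂
    exact congrArg (crossEdge · v) (hcol v hc)

lemma range_eq_range_crossEdge (c : (completeBipartiteGraph U V).edgeSet → C) :
    Set.range c = Set.range fun p : U × V => c (crossEdge p.1 p.2) := by
  have hsurj : Function.Surjective fun p : U × V => crossEdge p.1 p.2 := fun e =>
    let ⟨u, v, h⟩ := exists_crossEdge_eq e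
    ⟨(u, v), h⟩
  exact (hsurj.range_comp c).symm

lemma palette_inl (c : (completeBipartiteGraph U V).edgeSet → C) (u : U) :
    palette (completeBipartiteGraph U V) c (Sum.inl u) =
      Set.range fun v => c (crossEdge u v) := by
  ext γ
  constructor
  · rintro ⟨e, hu, rfl⟩
    obtain ⟨u', v, rfl⟩ := exists_crossEdge_eq e
    obtain rfl := inl_mem_crossEdge.1 hu
    exact ⟨v, rfl⟩
  · rintro ⟨v, rfl⟩
    exact ⟨crossEdge u v, inl_mem_crossEdge.2 rfl, rfl⟩

lemma palette_inr (c : (completeBipartiteGraph U V).edgeSet → C) (v : V) :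
    palette (completeBipartiteGraph U V) c (Sum.inr v) =
      Set.range fun u => c (crossEdge u v) := by
  ext γ
  constructor
  · rintro ⟨e, hv, rfl⟩
    obtain ⟨u, v', rfl⟩ := exists_crossEdge_eq e
    obtain rfl := inr_mem_crossEdge.1 hv
    exact ⟨u, rfl⟩
  · rintro ⟨u, rfl⟩
    exact ⟨crossEdge u v, inr_mem_crossEdge.2 rfl, rfl⟩

end CompleteBipartite

end SG

lemma ncard_range_coe_finset {ι α : Type*} [Fintype ι] [DecidableEq α] (f : ι → Finset α) :
    (Set.range fun x => (f x : Set α)).ncard = (Finset.univ.image f).card := by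
  rw [Set.range_comp' _ f, Set.ncard_image_of_injective _ Finset.coe_injective,
    ← Fintype.coe_image_univ, Set.ncard_coe_finset]

lemma Mcol_row_injective (i : Fin 5) : Function.Injective (Mcol i) := by
  decide +revert

lemma Mcol_col_injective (j : Fin 6) : Function.Injective fun i => Mcol i j := by
  decide +revert

lemma image_Mcol_entries :
    (Finset.univ.image fun p : Fin 5 × Fin 6 => Mcol p.1 p.2) = Finset.Icc 1 8 := by
  decide

/-- The table of palettes of the coloring `M'`: the entry sets of the rows of `M'` at the
vertices `u_i`, and of its columns at the vertices `v_j`. -/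
def paletteTable : Fin 5 ⊕ Fin 6 → Finset ℕ :=
  Sum.elim
    ![{1, 2, 3, 4, 5, 6}, {1, 2, 3, 4, 5, 6}, {1, 2, 3, 4, 5, 6},
      {1, 2, 4, 5, 7, 8}, {1, 2, 4, 5, 7, 8}]
    ![{1, 2, 3, 4, 5}, {1, 2, 3, 4, 5}, {1, 2, 3, 7, 8}, {4, 5, 6, 7, 8},
      {1, 2, 4, 5, 6}, {1, 2, 4, 5, 6}]

lemma image_Mcol_row (i : Fin 5) :
    Finset.univ.image (Mcol i) = paletteTable (Sum.inl i) := by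
  decide +revert

lemma image_Mcol_col (j : Fin 6) :
    (Finset.univ.image fun i => Mcol i j) = paletteTable (Sum.inr j) := by
  decide +revert

lemma card_image_paletteTable : (Finset.univ.image paletteTable).card = 6 := by
  decide

lemma ccol_crossEdge (i : Fin 5) (j : Fin 6) : ccol (SG.crossEdge i j).1 = Mcol i j := rfl

lemma range_ccol :
    (Set.range fun e : (completeBipartiteGraph (Fin 5) (Fin 6)).edgeSet => ccol e.1) =
      Finset.Icc 1 8 := by
  rw [SG.range_eq_range_crossEdge, ← image_Mcol_entries, Fintype.coe_image_univ]
  simp only [ccol_crossEdge]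

lemma palette_ccol (x : Fin 5 ⊕ Fin 6) :
    SG.palette (completeBipartiteGraph (Fin 5) (Fin 6)) (fun e => ccol e.1) x =
      paletteTable x := by
  rcases x with i | j
  · simp only [SG.palette_inl, ccol_crossEdge, ← image_Mcol_row, Fintype.coe_image_univ]
  · simp only [SG.palette_inr, ccol_crossEdge, ← image_Mcol_col, Fintype.coe_image_univ]

/-- assigning to the edge `u_i v_j` of `K_{5,6}` the `(i,j)`
entry of the matrix `M'` yields a proper edge-coloring using exactly `8`
colors in which exactly `6` distinct palettes occur. -/
theorem K56_eight_colors_six_palettes :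
    SG.Proper (completeBipartiteGraph (Fin 5) (Fin 6))
      (fun e => ccol e.1) ∧
    {γ : ℕ | ∃ e : (completeBipartiteGraph (Fin 5) (Fin 6)).edgeSet, ccol e.1 = γ}.ncard = 8 ∧
    {P : Set ℕ | ∃ x : Fin 5 ⊕ Fin 6,
      SG.palette (completeBipartiteGraph (Fin 5) (Fin 6)) (fun e => ccol e.1) x = P}.ncard
      = 6 := by
  refine ⟨SG.proper_of_rows_cols_injective Mcol_row_injective Mcol_col_injective, ?_, ?_⟩
  · change (Set.range fun e : (completeBipartiteGraph (Fin 5) (Fin 6)).edgeSet =>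
      ccol e.1).ncard = 8
    rw [range_ccol, Set.ncard_coe_finset, Nat.card_Icc]
  · change (Set.range (SG.palette (completeBipartiteGraph (Fin 5) (Fin 6))
      fun e => ccol e.1)).ncard = 6
    rw [funext palette_ccol, ncard_range_coe_finset, card_image_paletteTable]
end
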